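/- arXiv:2405.09172 — 6 statements merged into one kernel-verified Lean document; each statement's English description precedes it below -/
import Mathlib

section
/- Let n ≥ 1, let H be a cyclic group of order n written additively with generator h, and let Λ be an abelian group (written multiplicatively) equipped with an action of H by group automorphisms. For a 2-cocycle φ: H × H → Λ set Ω(φ) := ∏_{ν=0}^{n−1} φ(νh, h). Then Ω(φ) lies in the invariant subgroup Λ^H, Ω maps 2-coboundaries into the norm subgroup N_H(Λ), and Ω induces a group isomorphism H²(H, Λ) ≅ Λ^H / N_H(Λ). An inverse is induced by the map Ψ that sends x ∈ Λ^H to the 2-cocycle Ψ(x)(ih, jh) = x^{⌊(i+j)/n⌋ − ⌊i/n⌋ − ⌊j/n⌋} for i, j ∈ {0, …, n−1}. -/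
/-!
Statement 0: For a cyclic group `H = ℤ/nℤ` (with generator `h = 1`) acting on a
(multiplicative) abelian group `Λ` by group automorphisms, the map
`Ω(φ) = ∏_{ν=0}^{n-1} φ(νh, h)` induces a group isomorphism
`H²(H, Λ) ≅ Λ^H / N_H(Λ)`, with inverse induced by
`Ψ(x)(ih, jh) = x^(⌊(i+j)/n⌋ - ⌊i/n⌋ - ⌊j/n⌋)`.
-/

namespace Stmt0

variable {n : ℕ} {Λ : Type*} [CommGroup Λ]

/-- The (normalized) 2-cocycle condition for an action `ρ` of `ZMod n` on `Λ`. -/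
def IsCocycle (ρ : ZMod n → (Λ ≃* Λ)) (φ : ZMod n → ZMod n → Λ) : Prop :=
  (∀ x y z : ZMod n, φ x y * φ (x + y) z = ρ x (φ y z) * φ x (y + z)) ∧
    ∀ x : ZMod n, φ x 0 = 1 ∧ φ 0 x = 1

/-- The 2-coboundary condition for an action `ρ` of `ZMod n` on `Λ`. -/
def IsCoboundary (ρ : ZMod n → (Λ ≃* Λ)) (φ : ZMod n → ZMod n → Λ) : Prop :=
  ∃ ψ : ZMod n → Λ, ∀ x y : ZMod n, φ x y = ψ (x + y) * (ψ x)⁻¹ * (ρ x (ψ y))⁻¹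

/-- `Ω(φ) = ∏_{ν=0}^{n-1} φ(νh, h)`, where the generator is `h = 1`. -/
def Omega (n : ℕ) {Λ : Type*} [CommGroup Λ] (φ : ZMod n → ZMod n → Λ) : Λ :=
  ∏ ν ∈ Finset.range n, φ (ν : ZMod n) 1

/-- `x` is an `H`-invariant element of `Λ`, i.e. `x ∈ Λ^H`. -/
def Invariant (ρ : ZMod n → (Λ ≃* Λ)) (x : Λ) : Prop := ∀ g : ZMod n, ρ g x = x

/-- `x` belongs to the norm subgroup `N_H(Λ) = {∏_{g ∈ H} g·λ : λ ∈ Λ}`,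
with the product over `H` written as a product over the representatives `νh`, `0 ≤ ν < n`. -/
def IsNorm (n : ℕ) {Λ : Type*} [CommGroup Λ] (ρ : ZMod n → (Λ ≃* Λ)) (x : Λ) : Prop :=
  ∃ lam : Λ, x = ∏ ν ∈ Finset.range n, ρ (ν : ZMod n) lam

/-- `Ψ(x)(ih, jh) = x^(⌊(i+j)/n⌋ - ⌊i/n⌋ - ⌊j/n⌋)` for the representatives
`i, j ∈ {0, …, n-1}` of the arguments. -/
def Psi (n : ℕ) {Λ : Type*} [CommGroup Λ] (x : Λ) : ZMod n → ZMod n → Λ := fun a b =>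
  x ^ ((((a.val + b.val) / n : ℕ) : ℤ) - ((a.val / n : ℕ) : ℤ) - ((b.val / n : ℕ) : ℤ))

/-!
For a cocycle `φ` put `P(k) = ∏_{ν<k} φ(ν, 1)`, where `k` is a natural number. The cocycle identity
with third argument `1`, summed up over the second, gives `P(k + m) = φ(k, m) · P(k) · (k · P(m))`:
pulled back to `ℕ`, the cocycle is a coboundary. What prevents `P` from descending to `ℤ/nℤ` is the
relation `P(k + n) = P(k) · Ω(φ)`. On the representatives `0, …, n - 1` this leaves a factor `Ω(φ)`
for each carry, which is `Ψ(Ω(φ))`; hence `φ` and `Ψ(Ω(φ))` are cohomologous. Putting `m = n`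
shows that `Ω(φ)` is invariant.

The partial norms `N(k) = ∏_{ν<k} ν · λ` satisfy `N(k + m) = N(k) · (k · N(m))`, so the same carry
computation exhibits `Ψ(N(n))` as a coboundary. Together these two facts give injectivity.
-/

theorem div_add_mod_add_div (m c n : ℕ) : m / n + (m % n + c) / n = (m + c) / n := by
  rcases n.eq_zero_or_pos with rfl | hn
  · simp only [Nat.div_zero]
  · rw [← Nat.mul_add_div hn, ← add_assoc, Nat.div_add_mod]

section PartialProd

variable {M : Type*} [CommMonoid M]

/-- The partial product `∏_{ν=0}^{k-1} u(νh)` along the multiples of the generator `h = 1`. The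
length `k` is a natural number, as the product depends on more than the class of `k` modulo `n`.
Both `Ω(φ)` and the norm of an element are such products of length `n`. -/
def partialProd (u : ZMod n → M) (k : ℕ) : M :=
  ∏ ν ∈ Finset.range k, u ν

theorem partialProd_zero (u : ZMod n → M) : partialProd u 0 = 1 :=
  Finset.prod_range_zero _

theorem partialProd_succ (u : ZMod n → M) (k : ℕ) :
    partialProd u (k + 1) = partialProd u k * u k :=
  Finset.prod_range_succ _ _

theorem partialProd_add (u : ZMod n → M) (k m : ℕ) :
    partialProd u (k + m) = partialProd u k * partialProd (fun a : ZMod n => u (k + a)) m := by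
  simp only [partialProd, Finset.prod_range_add, Nat.cast_add]

theorem partialProd_add_self (u : ZMod n → M) (k : ℕ) :
    partialProd u (k + n) = partialProd u k * partialProd u n := by
  rw [add_comm, partialProd_add, mul_comm]
  simp only [ZMod.natCast_self, zero_add]

theorem partialProd_eq_mod_mul_pow (u : ZMod n → M) (k : ℕ) :
    partialProd u k = partialProd u (k % n) * partialProd u n ^ (k / n) := by
  have add_mul_self (r q : ℕ) :
      partialProd u (r + n * q) = partialProd u r * partialProd u n ^ q := by
    induction q with
    | zero => rw [mul_zero, add_zero, pow_zero, mul_one]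
    | succ q ih => rw [Nat.mul_succ, ← add_assoc, partialProd_add_self, ih, pow_succ, mul_assoc]
  rw [← add_mul_self, Nat.mod_add_div]

end PartialProd

theorem psi_eq_pow [NeZero n] (x : Λ) (a b : ZMod n) :
    Psi n x a b = x ^ ((a.val + b.val) / n) := by
  rw [Psi, Nat.div_eq_of_lt a.val_lt, Nat.div_eq_of_lt b.val_lt, Nat.cast_zero, sub_zero, sub_zero,
    zpow_natCast]

theorem partialProd_val_add_val [NeZero n] (u : ZMod n → Λ) (a b : ZMod n) :
    partialProd u (a.val + b.val) =
      partialProd u (a + b).val * Psi n (partialProd u n) a b := by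
  rw [partialProd_eq_mod_mul_pow, psi_eq_pow, ZMod.val_add]

theorem omega_mul (φ φ' : ZMod n → ZMod n → Λ) :
    Omega n (fun a b => φ a b * φ' a b) = Omega n φ * Omega n φ' :=
  Finset.prod_mul_distrib

theorem omega_psi (hn : 2 ≤ n) (x : Λ) : Omega n (Psi n x) = x := by
  obtain ⟨m, rfl⟩ : ∃ m, n = m + 1 := ⟨n - 1, by lia⟩
  have : Fact (1 < m + 1) := ⟨hn⟩
  have psi_natCast_one {ν : ℕ} (hν : ν < m + 1) :
      Psi (m + 1) x ν 1 = x ^ ((ν + 1) / (m + 1)) := by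
    rw [psi_eq_pow, ZMod.val_natCast_of_lt hν, ZMod.val_one]
  -- Among the sums `ν + 1` with `ν ≤ m`, only the last one produces a carry.
  have no_carry : ∀ ν ∈ Finset.range m, Psi (m + 1) x ν 1 = 1 := fun ν hν => by
    have hν : ν < m := Finset.mem_range.1 hν
    rw [psi_natCast_one (by lia), Nat.div_eq_of_lt (by lia), pow_zero]
  rw [Omega, Finset.prod_range_succ, Finset.prod_eq_one no_carry, one_mul,
    psi_natCast_one m.lt_succ_self, Nat.div_self m.succ_pos, pow_one]

theorem isNorm_one (ρ : ZMod n → (Λ ≃* Λ)) : IsNorm n ρ 1 :=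
  ⟨1, by simp only [map_one, Finset.prod_const_one]⟩

theorem isNorm_zmod_one (ρ : ZMod 1 → (Λ ≃* Λ)) (x : Λ) : IsNorm 1 ρ x :=
  ⟨(ρ 0).symm x, by simp only [Finset.prod_range_one, Nat.cast_zero, MulEquiv.apply_symm_apply]⟩

theorem isNorm_omega_psi_mul_inv (hn : 1 ≤ n) (ρ : ZMod n → (Λ ≃* Λ)) (x : Λ) :
    IsNorm n ρ (Omega n (Psi n x) * x⁻¹) := by
  rcases hn.eq_or_lt with rfl | hn
  · -- Here `Ω(Ψ(x)) = 1`: the generator is `0`, so no carry occurs.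
    exact isNorm_zmod_one ρ _
  · rw [omega_psi hn, mul_inv_cancel]
    exact isNorm_one ρ

section Cohomology

variable {ρ : ZMod n → (Λ ≃* Λ)} {φ φ' : ZMod n → ZMod n → Λ}

theorem IsCoboundary.mul (hφ : IsCoboundary ρ φ) (hφ' : IsCoboundary ρ φ') :
    IsCoboundary ρ (fun a b => φ a b * φ' a b) := by
  obtain ⟨ψ, hψ⟩ := hφ
  obtain ⟨ψ', hψ'⟩ := hφ'
  refine ⟨fun a => ψ a * ψ' a, fun a b => ?_⟩
  simp only [hψ, hψ', map_mul, mul_inv, mul_mul_mul_comm]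

theorem IsCoboundary.isNorm_omega (hφ : IsCoboundary ρ φ) : IsNorm n ρ (Omega n φ) := by
  obtain ⟨ψ, hψ⟩ := hφ
  have telescope : ∏ ν ∈ Finset.range n, ψ (ν + 1) * (ψ ν)⁻¹ = 1 := by
    simpa [div_eq_mul_inv] using Finset.prod_range_div (fun k : ℕ => ψ k) n
  refine ⟨(ψ 1)⁻¹, ?_⟩
  simp only [Omega, hψ, map_inv]
  rw [Finset.prod_mul_distrib, telescope, one_mul]

theorem IsCocycle.partialProd_add (hφ : IsCocycle ρ φ) (k m : ℕ) :
    partialProd (φ · 1) (k + m) =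
      φ k m * partialProd (φ · 1) k * ρ k (partialProd (φ · 1) m) := by
  induction m with
  | zero => rw [add_zero, Nat.cast_zero, (hφ.2 k).1, partialProd_zero, map_one, one_mul, mul_one]
  | succ m ih =>
    have cocycle : φ k m * φ (k + m) 1 = ρ k (φ m 1) * φ k (m + 1) := hφ.1 k m 1
    rw [← add_assoc, partialProd_succ, partialProd_succ, ih, map_mul, Nat.cast_add, Nat.cast_succ]
    calc
      φ k m * partialProd (φ · 1) k * ρ k (partialProd (φ · 1) m) * φ (k + m) 1
        = φ k m * φ (k + m) 1 * (partialProd (φ · 1) k * ρ k (partialProd (φ · 1) m)) := by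
          ac_rfl
      _ = φ k (m + 1) * partialProd (φ · 1) k * (ρ k (partialProd (φ · 1) m) * ρ k (φ m 1)) := by
          rw [cocycle]
          ac_rfl

theorem IsCocycle.invariant_omega [NeZero n] (hφ : IsCocycle ρ φ) : Invariant ρ (Omega n φ) := by
  intro g
  obtain ⟨k, rfl⟩ := ZMod.natCast_zmod_surjective g
  have h := hφ.partialProd_add k n
  rw [ZMod.natCast_self, (hφ.2 k).1, one_mul, partialProd_add_self] at h
  exact (mul_left_cancel h).symm

theorem IsCocycle.isCoboundary_mul_inv_psi_omega [NeZero n] (hφ : IsCocycle ρ φ) :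
    IsCoboundary ρ (fun a b => φ a b * (Psi n (Omega n φ) a b)⁻¹) := by
  refine ⟨fun a => partialProd (φ · 1) a.val, fun a b => ?_⟩
  have carry : φ a b * (partialProd (φ · 1) a.val * ρ a (partialProd (φ · 1) b.val)) =
      partialProd (φ · 1) (a + b).val * Psi n (Omega n φ) a b := by
    calc
      _ = partialProd (φ · 1) (a.val + b.val) := by
        rw [hφ.partialProd_add, ZMod.natCast_zmod_val, ZMod.natCast_zmod_val, mul_assoc]
      _ = _ := partialProd_val_add_val (φ · 1) a b
  beta_reduce
  rw [mul_assoc, ← mul_inv, ← div_eq_mul_inv, ← div_eq_mul_inv, div_eq_div_iff_mul_eq_mul]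
  exact carry

theorem partialProd_orbit_add
    (hρadd : ∀ g h : ZMod n, ∀ a : Λ, ρ (g + h) a = ρ g (ρ h a)) (lam : Λ) (k m : ℕ) :
    partialProd (ρ · lam) (k + m) =
      partialProd (ρ · lam) k * ρ k (partialProd (ρ · lam) m) := by
  rw [partialProd_add]
  simp only [partialProd, hρadd, map_prod]

theorem isCoboundary_psi_of_isNorm [NeZero n]
    (hρadd : ∀ g h : ZMod n, ∀ a : Λ, ρ (g + h) a = ρ g (ρ h a)) {x : Λ} (hx : IsNorm n ρ x) :
    IsCoboundary ρ (Psi n x) := by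
  obtain ⟨lam, rfl⟩ := hx
  refine ⟨fun a => (partialProd (ρ · lam) a.val)⁻¹, fun a b => ?_⟩
  have h := partialProd_orbit_add hρadd lam a.val b.val
  rw [partialProd_val_add_val, ZMod.natCast_zmod_val] at h
  rw [map_inv, inv_inv, inv_inv, mul_assoc, eq_inv_mul_iff_mul_eq]
  exact h

theorem IsCocycle.isCoboundary_of_isNorm_omega [NeZero n] (hφ : IsCocycle ρ φ)
    (hρadd : ∀ g h : ZMod n, ∀ a : Λ, ρ (g + h) a = ρ g (ρ h a)) (hN : IsNorm n ρ (Omega n φ)) :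
    IsCoboundary ρ φ := by
  simpa only [inv_mul_cancel_right] using
    hφ.isCoboundary_mul_inv_psi_omega.mul (isCoboundary_psi_of_isNorm hρadd hN)

theorem Invariant.isCocycle_psi [NeZero n] {x : Λ} (hx : Invariant ρ x) :
    IsCocycle ρ (Psi n x) := by
  refine ⟨fun a b c => ?_, fun a => ?_⟩
  · have carries : (a.val + b.val) / n + ((a.val + b.val) % n + c.val) / n =
        (b.val + c.val) / n + (a.val + (b.val + c.val) % n) / n := by
      rw [add_comm a.val (_ % n), div_add_mod_add_div, div_add_mod_add_div]
      congr 1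
      ring
    simp only [psi_eq_pow, map_pow, hx a, ← pow_add, ZMod.val_add, carries]
  · simp only [psi_eq_pow, ZMod.val_zero, add_zero, zero_add, Nat.div_eq_of_lt a.val_lt, pow_zero,
      and_self]

end Cohomology

/-- `Ω` takes values in `Λ^H`, sends 2-coboundaries into `N_H(Λ)`, and induces a group
isomorphism `H²(H, Λ) ≅ Λ^H / N_H(Λ)`, with inverse induced by `Ψ`. -/
theorem omega_induces_iso (n : ℕ) (hn : 1 ≤ n) (Λ : Type*) [CommGroup Λ]
    (ρ : ZMod n → (Λ ≃* Λ)) (hρ₀ : ρ 0 = MulEquiv.refl Λ)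
    (hρadd : ∀ g h : ZMod n, ∀ a : Λ, ρ (g + h) a = ρ g (ρ h a)) :
    -- `Ω(φ)` lies in the invariant subgroup `Λ^H`
    (∀ φ : ZMod n → ZMod n → Λ, IsCocycle ρ φ → Invariant ρ (Omega n φ)) ∧
    -- `Ω` is multiplicative on 2-cocycles (it is a group homomorphism)
    (∀ φ φ' : ZMod n → ZMod n → Λ, IsCocycle ρ φ → IsCocycle ρ φ' →
      Omega n (fun a b => φ a b * φ' a b) = Omega n φ * Omega n φ') ∧
    -- `Ω` maps 2-coboundaries into the norm subgroup `N_H(Λ)`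
    (∀ φ : ZMod n → ZMod n → Λ, IsCocycle ρ φ → IsCoboundary ρ φ → IsNorm n ρ (Omega n φ)) ∧
    -- injectivity of the induced map on `H²`
    (∀ φ : ZMod n → ZMod n → Λ, IsCocycle ρ φ → IsNorm n ρ (Omega n φ) → IsCoboundary ρ φ) ∧
    -- `Ψ(x)` is a 2-cocycle for every invariant `x`
    (∀ x : Λ, Invariant ρ x → IsCocycle ρ (Psi n x)) ∧
    -- `Ω ∘ Ψ` is the identity modulo norms
    (∀ x : Λ, Invariant ρ x → IsNorm n ρ (Omega n (Psi n x) * x⁻¹)) ∧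
    -- `Ψ ∘ Ω` is the identity modulo coboundaries
    (∀ φ : ZMod n → ZMod n → Λ, IsCocycle ρ φ →
      IsCoboundary ρ (fun a b => φ a b * (Psi n (Omega n φ) a b)⁻¹)) := by
  have : NeZero n := ⟨Nat.one_le_iff_ne_zero.1 hn⟩
  exact ⟨fun _ hφ => hφ.invariant_omega,
    fun φ φ' _ _ => omega_mul φ φ',
    fun _ _ hφ => hφ.isNorm_omega,
    fun _ hφ hN => hφ.isCoboundary_of_isNorm_omega hρadd hN,
    fun _ hx => hx.isCocycle_psi,
    fun x _ => isNorm_omega_psi_mul_inv hn ρ x,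
    fun _ hφ => hφ.isCoboundary_mul_inv_psi_omega⟩

end Stmt0
end

section
/- Let D be a divisible abelian group written multiplicatively, w: D → ℚ a group homomorphism, X and Y free abelian groups of the same finite rank r, X^∨ := Hom(X, ℤ), φ: Y → X an injective homomorphism, and β: Y → X^∨ an injective homomorphism with finite cokernel; set N := |X^∨/β(Y)| and let μ: X^∨ → X be the unique homomorphism with μ(β(y)) = N·φ(y) for all y ∈ Y (it exists because N annihilates X^∨/β(Y) and X is torsion-free). Let τ: Y × X → D be biadditive with w(τ(y,x)) = (β(y))(x) and τ(y, φ(z)) = τ(z, φ(y)) for all y, z ∈ Y and x ∈ X. Then there exists a biadditive map τ^e: X^∨ × X → D such that: (a) τ^e(β(y), x) = τ(y, x) for all y ∈ Y, x ∈ X; (b) w(τ^e(u, x)) = u(x) for all u ∈ X^∨, x ∈ X; (c) τ^e(u, μ(v)) = τ^e(v, μ(u)) for all u, v ∈ X^∨. Moreover, setting ψ^e(u) := τ^e(u, μ(u)), one has ψ^e(u+v) = ψ^e(u)·ψ^e(v)·τ^e(u, μ(v))² for all u, v ∈ X^∨, and if ψ: Y → D satisfies ψ(y)² = τ(y, φ(y))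 for all y ∈ Y, then ψ^e(β(y)) = ψ(y)^{2N}. -/
/-!
Write `V` for `X^∨`, and regard a biadditive map `Y × X → D` as a homomorphism `Y → Hom(X, D)`.
Since `X` is torsion-free and `D` is divisible, `Hom(X, D)` is divisible, hence an injective abelian
group, so `τ` extends along the injection `β`. Every extension `τ^e` then works. The formula for `w`
holds because it holds on the finite-index subgroup `β(Y)` and `ℚ` is torsion-free.

For the symmetry, let `u, v ∈ V`, let `a` be the index of `β(Y)` in `β(Y) + ℤu`, and `b` the index
of `β(Y) + ℤu` in `V`. Then `N = ab`, `au = β(y)` and `bv = su + β(z)`. As `X` is torsion-free,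
it follows that `μ(u) = b·φ(y)` and `μ(v) = s·φ(y) + a·φ(z)`, so that in additive notation
`τ^e(u, μ(v)) = s·τ^e(u, φ(y)) + τ(y, φ(z))` and `τ^e(v, μ(u)) = s·τ^e(u, φ(y)) + τ(z, φ(y))`.
-/

theorem zsmul_addMonoidHom_surjective {X E : Type*} [AddCommGroup X] [IsAddTorsionFree X]
    [AddCommGroup E] [DivisibleBy E ℤ] {n : ℤ} (hn : n ≠ 0) :
    Function.Surjective fun f : X →+ E => n • f := fun g => by
  obtain ⟨f, hf⟩ := (Module.Baer.of_divisible E).extension_property_addMonoidHom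
    (zsmulAddGroupHom n : X →+ X) (zsmul_right_injective hn) g
  refine ⟨f, AddMonoidHom.ext fun x => ?_⟩
  calc n • f x = f (n • x) := (map_zsmul f n x).symm
    _ = g x := DFunLike.congr_fun hf x

theorem exists_biadditive_extension {V X Y E : Type*} [AddCommGroup V] [AddCommGroup X]
    [IsAddTorsionFree X] [AddCommGroup Y] [AddCommGroup E] [DivisibleBy E ℤ]
    {β : Y →+ V} (hβ : Function.Injective β) (T : Y →+ X →+ E) :
    ∃ L : V →+ X →+ E, L.comp β = T :=
  letI : DivisibleBy (X →+ E) ℤ := divisibleByOfSMulRightSurj _ _ zsmul_addMonoidHom_surjective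
  (Module.Baer.of_divisible (X →+ E)).extension_property_addMonoidHom β hβ T

theorem addMonoidHom_eq_of_eqOn_finiteIndex {V A : Type*} [AddCommGroup V] [AddCommGroup A]
    [IsAddTorsionFree A] {H : AddSubgroup V} [H.FiniteIndex] {f g : V →+ A}
    (h : Set.EqOn f g H) : f = g := by
  ext v
  apply nsmul_right_injective (AddSubgroup.FiniteIndex.index_ne_zero (H := H))
  simpa only [map_nsmul] using h (H.nsmul_index_mem v)

theorem exists_index_eq_mul {V : Type*} [AddCommGroup V] (H : AddSubgroup V) (u v : V) :
    ∃ (a b : ℕ) (s : ℤ), H.index = a * b ∧ a • u ∈ H ∧ b • v - s • u ∈ H := by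
  let K := H ⊔ AddSubgroup.zmultiples u
  have hu : u ∈ K := AddSubgroup.mem_sup_right (AddSubgroup.mem_zmultiples u)
  obtain ⟨h, hh, _, ⟨s, rfl⟩, hs⟩ := AddSubgroup.mem_sup.mp (K.nsmul_index_mem v)
  refine ⟨H.relIndex K, K.index, s, (AddSubgroup.relIndex_mul_index le_sup_left).symm,
    (H.addSubgroupOf K).nsmul_index_mem ⟨u, hu⟩, ?_⟩
  rwa [← hs, add_sub_cancel_right]

theorem apply_comm_of_finiteIndex_range {V X Y E : Type*} [AddCommGroup V] [AddCommGroup X]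
    [IsAddTorsionFree X] [AddCommGroup Y] [AddCommGroup E] {φ : Y →+ X} {β : Y →+ V}
    [β.range.FiniteIndex] {N : ℕ} (hN : β.range.index ∣ N) {μ : V →+ X}
    (hμ : ∀ y, μ (β y) = N • φ y) {L : V →+ X →+ E}
    (hL : ∀ y z, L (β y) (φ z) = L (β z) (φ y)) (u v : V) : L u (μ v) = L v (μ u) := by
  obtain ⟨a, b, s, hab, ⟨y, hy⟩, ⟨z, hz⟩⟩ := exists_index_eq_mul β.range u v
  obtain ⟨ha, hb⟩ : a ≠ 0 ∧ b ≠ 0 :=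
    mul_ne_zero_iff.mp (hab ▸ AddSubgroup.FiniteIndex.index_ne_zero)
  obtain ⟨k, rfl⟩ : a * b ∣ N := hab ▸ hN
  have hbv : b • v = s • u + β z := by rw [hz, add_sub_cancel]
  have hμu : μ u = (b * k) • φ y := by
    apply nsmul_right_injective ha
    simp only [← map_nsmul μ, ← hy, hμ]
    rw [mul_assoc, mul_nsmul']
  have hμv : μ v = k • (s • φ y + a • φ z) := by
    apply nsmul_right_injective hb
    simp only [← map_nsmul μ, hbv, map_add, map_zsmul, hμ, hμu]
    module
  calc L u (μ v) = k • (s • L u (φ y) + L (a • u) (φ z)) := by simp [hμv]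
    _ = k • (s • L u (φ y) + L (β z) (φ y)) := by rw [← hy, hL]
    _ = k • L (b • v) (φ y) := by simp [hbv]
    _ = L v (μ u) := by simp [hμu, mul_nsmul]

theorem stmt4_general {D A V X Y : Type*} [CommGroup D] [AddCommGroup A] [IsAddTorsionFree A]
    [AddCommGroup V] [AddCommGroup X] [IsAddTorsionFree X] [AddCommGroup Y]
    (hdiv : ∀ (d : D) (m : ℕ), 0 < m → ∃ c : D, c ^ m = d)
    (w : D → A) (hw : ∀ a b : D, w (a * b) = w a + w b) (p : V →+ X →+ A)
    (φ : Y →+ X) (β : Y →+ V) (hβ : Function.Injective β) (hfin : Finite (V ⧸ β.range))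
    (N : ℕ) (hN : Nat.card (V ⧸ β.range) ∣ N) (μ : V →+ X) (hμ : ∀ y : Y, μ (β y) = N • φ y)
    (τ : Y → X → D)
    (hτ₁ : ∀ (y y' : Y) (x : X), τ (y + y') x = τ y x * τ y' x)
    (hτ₂ : ∀ (y : Y) (x x' : X), τ y (x + x') = τ y x * τ y x')
    (hτw : ∀ (y : Y) (x : X), w (τ y x) = p (β y) x)
    (hτsym : ∀ y z : Y, τ y (φ z) = τ z (φ y)) :
    ∃ τe : V → X → D,
      (∀ (u u' : V) (x : X), τe (u + u') x = τe u x * τe u' x) ∧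
      (∀ (u : V) (x x' : X), τe u (x + x') = τe u x * τe u x') ∧
      (∀ (y : Y) (x : X), τe (β y) x = τ y x) ∧
      (∀ (u : V) (x : X), w (τe u x) = p u x) ∧
      (∀ u v : V, τe u (μ v) = τe v (μ u)) ∧
      (∀ u v : V, τe (u + v) (μ (u + v)) = τe u (μ u) * τe v (μ v) * τe u (μ v) ^ 2) ∧
      (∀ ψ : Y → D, (∀ y : Y, ψ y ^ 2 = τ y (φ y)) →
        ∀ y : Y, τe (β y) (μ (β y)) = ψ y ^ (2 * N)) := by
  have : β.range.FiniteIndex := AddSubgroup.finiteIndex_of_finite_quotient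
  let _ : DivisibleBy (Additive D) ℕ := divisibleByOfSMulRightSurj _ _ fun hm d =>
    hdiv d.toMul _ (Nat.pos_of_ne_zero hm)
  let _ : DivisibleBy (Additive D) ℤ := AddGroup.divisibleByIntOfDivisibleByNat _
  let W : Additive D →+ A := AddMonoidHom.mk' (fun d => w d.toMul) fun c d => hw _ _
  let T : Y →+ X →+ Additive D :=
    AddMonoidHom.mk' (fun y => AddMonoidHom.mk' (fun x => Additive.ofMul (τ y x)) (hτ₂ y))
      fun y y' => AddMonoidHom.ext (hτ₁ y y')
  obtain ⟨L, hL⟩ := exists_biadditive_extension hβ T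
  have hLβ (y : Y) (x : X) : L (β y) x = Additive.ofMul (τ y x) :=
    DFunLike.congr_fun (DFunLike.congr_fun hL y) x
  have hLw (u : V) (x : X) : W (L u x) = p u x := by
    have h : W.comp (L.flip x) = p.flip x :=
      addMonoidHom_eq_of_eqOn_finiteIndex (H := β.range) <|
        Set.forall_mem_range.mpr fun y => (congrArg W (hLβ y x)).trans (hτw y x)
    exact DFunLike.congr_fun h u
  have hLsymm : ∀ u v, L u (μ v) = L v (μ u) :=
    apply_comm_of_finiteIndex_range hN hμ fun y z => by rw [hLβ, hLβ, hτsym]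
  refine ⟨fun u x => (L u x).toMul, fun u u' x => ?_, fun u => map_add (L u), hLβ, hLw, hLsymm,
    fun u v => ?_, fun ψ hψ y => ?_⟩
  · exact DFunLike.congr_fun (map_add L u u') x
  · change L (u + v) (μ (u + v)) = L u (μ u) + L v (μ v) + 2 • L u (μ v)
    simp only [map_add, AddMonoidHom.add_apply, hLsymm v u]
    abel
  · change L (β y) (μ (β y)) = (2 * N) • Additive.ofMul (ψ y)
    rw [hμ, map_nsmul, hLβ, ← hψ, ofMul_pow, mul_nsmul]

theorem stmt4 (D : Type*) [CommGroup D]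
    -- `D` is divisible
    (hdiv : ∀ (d : D) (m : ℕ), 0 < m → ∃ c : D, c ^ m = d)
    -- `w : D → ℚ` is a group homomorphism
    (w : D → ℚ) (hw : ∀ a b : D, w (a * b) = w a + w b)
    -- `X` and `Y` are free abelian groups of the same finite rank `r`
    (X Y : Type*) [AddCommGroup X] [AddCommGroup Y]
    [Module.Free ℤ X] [Module.Finite ℤ X] [Module.Free ℤ Y] [Module.Finite ℤ Y]
    (r : ℕ) (hrX : Module.finrank ℤ X = r) (hrY : Module.finrank ℤ Y = r)
    -- `φ : Y → X` is an injective homomorphism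
    (φ : Y →+ X) (hφ : Function.Injective φ)
    -- `β : Y → X^∨` is an injective homomorphism with finite cokernel
    (β : Y →+ (X →+ ℤ)) (hβ : Function.Injective β)
    (hfin : Finite ((X →+ ℤ) ⧸ β.range))
    -- `N := |X^∨ / β(Y)|`
    (N : ℕ) (hN : N = Nat.card ((X →+ ℤ) ⧸ β.range))
    -- `μ : X^∨ → X` is the (unique) homomorphism with `μ(β(y)) = N·φ(y)`
    (μ : (X →+ ℤ) →+ X) (hμ : ∀ y : Y, μ (β y) = N • φ y)
    -- `τ : Y × X → D` is biadditive with `w(τ(y,x)) = β(y)(x)` and `τ(y, φz) = τ(z, φy)`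
    (τ : Y → X → D)
    (hτ₁ : ∀ (y y' : Y) (x : X), τ (y + y') x = τ y x * τ y' x)
    (hτ₂ : ∀ (y : Y) (x x' : X), τ y (x + x') = τ y x * τ y x')
    (hτw : ∀ (y : Y) (x : X), w (τ y x) = ((β y) x : ℚ))
    (hτsym : ∀ y z : Y, τ y (φ z) = τ z (φ y)) :
    ∃ τe : (X →+ ℤ) → X → D,
      -- `τ^e` is biadditive
      (∀ (u u' : X →+ ℤ) (x : X), τe (u + u') x = τe u x * τe u' x) ∧
      (∀ (u : X →+ ℤ) (x x' : X), τe u (x + x') = τe u x * τe u x') ∧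
      -- (a) `τ^e(β(y), x) = τ(y, x)`
      (∀ (y : Y) (x : X), τe (β y) x = τ y x) ∧
      -- (b) `w(τ^e(u, x)) = u(x)`
      (∀ (u : X →+ ℤ) (x : X), w (τe u x) = (u x : ℚ)) ∧
      -- (c) `τ^e(u, μ(v)) = τ^e(v, μ(u))`
      (∀ u v : X →+ ℤ, τe u (μ v) = τe v (μ u)) ∧
      -- with `ψ^e(u) := τ^e(u, μ(u))`:
      -- `ψ^e(u+v) = ψ^e(u)·ψ^e(v)·τ^e(u, μ(v))²`
      (∀ u v : X →+ ℤ,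
        τe (u + v) (μ (u + v)) = τe u (μ u) * τe v (μ v) * τe u (μ v) ^ 2) ∧
      -- if `ψ(y)² = τ(y, φ(y))` for all `y`, then `ψ^e(β(y)) = ψ(y)^(2N)`
      (∀ ψ : Y → D, (∀ y : Y, ψ y ^ 2 = τ y (φ y)) →
        ∀ y : Y, τe (β y) (μ (β y)) = ψ y ^ (2 * N)) := by
  have : IsAddTorsionFree X := .of_isTorsionFree ℤ X
  exact stmt4_general hdiv w hw (AddMonoidHom.compHom (Int.castAddHom ℚ)) φ β hβ hfin N hN.symm.dvd
    μ hμ τ hτ₁ hτ₂ hτw hτsym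
end

section
/- Let A and B be abelian groups (written additively), Γ a commutative group (written multiplicatively), λ: A → B a homomorphism, and m: A × B → Γ a map satisfying m(u+u′, x) = m(u, x)·m(u′, x + λ(u)) for all u, u′ ∈ A and x ∈ B. Define ψ(u) := m(u, 0) and τ(u, x) := m(u, x)·ψ(u)⁻¹. Assume that τ is additive in the second variable, i.e., τ(u, x+x′) = τ(u,x)·τ(u,x′) for all u ∈ A, x, x′ ∈ B. Then: (a) m(0, x) = 1, ψ(0) = 1 and τ(0, x) = 1; (b) τ is also additive in the first variable, i.e., τ(u+u′, x) = τ(u,x)·τ(u′,x), so τ is biadditive; (c) ψ(u+u′) = ψ(u)·ψ(u′)·τ(u′, λ(u)) for all u, u′ ∈ A. -/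
/-!
Factor `m u x = τ u x * ψ u`. The functional equation at `x = 0` is the quasi-quadratic law for `ψ`.
At general `x`, additivity of `τ u'` splits `τ u' (x + lam u)`, and the law for `ψ` absorbs the
factor `τ u' (lam u)`, which leaves additivity of `τ` in the first variable. At `u = u' = 0` the
two laws make `τ 0 x`, and then `ψ 0`, idempotents of a group, hence trivial.
-/

section

variable {A B Γ : Type*}

/-- The functional equation relating `m` to translation by `lam`. If `lam` is a homomorphism, it
says that `m` is a crossed homomorphism from `A` to the functions `B → Γ`, on which `A` acts by
translation through `lam`. -/
def IsTranslationCocycle [Add A] [Add B] [Mul Γ] (lam : A → B) (m : A → B → Γ) : Prop :=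
  ∀ (u u' : A) (x : B), m (u + u') x = m u x * m u' (x + lam u)

/-- The function `ψ` attached to `m`, which is the trivialization part of the degeneration data. -/
def originValue [Zero B] (m : A → B → Γ) (u : A) : Γ :=
  m u 0

/-- The function `τ` attached to `m`, which becomes the bilinear part of the degeneration data: `m`
rescaled to be `1` at the origin of `B`. -/
def originRatio [Zero B] [Div Γ] (m : A → B → Γ) (u : A) (x : B) : Γ :=
  m u x / originValue m u

theorem originRatio_mul_originValue [Zero B] [Group Γ] (m : A → B → Γ) (u : A) (x : B) :
    originRatio m u x * originValue m u = m u x :=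
  div_mul_cancel _ _

namespace IsTranslationCocycle

variable [AddZeroClass B] [CommGroup Γ] {lam : A → B} {m : A → B → Γ}

section Add

variable [Add A]

theorem originValue_add (hm : IsTranslationCocycle lam m) (u u' : A) :
    originValue m (u + u') = originValue m u * originValue m u' * originRatio m u' (lam u) :=
  calc
    originValue m (u + u') = originValue m u * m u' (0 + lam u) := hm u u' 0
    _ = originValue m u * (originRatio m u' (lam u) * originValue m u') := by
      rw [zero_add, originRatio_mul_originValue]
    _ = originValue m u * originValue m u' * originRatio m u' (lam u) := by
      ac_rfl

theorem originRatio_add_left (hm : IsTranslationCocycle lam m)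
    (hadd : ∀ u x x', originRatio m u (x + x') = originRatio m u x * originRatio m u x')
    (u u' : A) (x : B) :
    originRatio m (u + u') x = originRatio m u x * originRatio m u' x := by
  refine div_eq_of_eq_mul' ?_
  calc
    m (u + u') x = m u x * m u' (x + lam u) := hm u u' x
    _ = originRatio m u x * originValue m u *
        (originRatio m u' x * originRatio m u' (lam u) * originValue m u') := by
      rw [← hadd, originRatio_mul_originValue, originRatio_mul_originValue]
    _ = originValue m u * originValue m u' * originRatio m u' (lam u) *
        (originRatio m u x * originRatio m u' x) := by
      ac_rfl
    _ = originValue m (u + u') * (originRatio m u x * originRatio m u' x) := by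
      rw [hm.originValue_add]

end Add

section Zero

variable [AddZeroClass A]

theorem originRatio_zero_left (hm : IsTranslationCocycle lam m)
    (hadd : ∀ u x x', originRatio m u (x + x') = originRatio m u x * originRatio m u x') (x : B) :
    originRatio m 0 x = 1 := by
  simpa using hm.originRatio_add_left hadd 0 0 x

theorem originValue_zero (hm : IsTranslationCocycle lam m)
    (hadd : ∀ u x x', originRatio m u (x + x') = originRatio m u x * originRatio m u x') :
    originValue m 0 = 1 := by
  simpa [hm.originRatio_zero_left hadd] using hm.originValue_add 0 0

theorem apply_zero (hm : IsTranslationCocycle lam m)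
    (hadd : ∀ u x x', originRatio m u (x + x') = originRatio m u x * originRatio m u x') (x : B) :
    m 0 x = 1 := by
  rw [← originRatio_mul_originValue m, hm.originRatio_zero_left hadd, hm.originValue_zero hadd,
    one_mul]

end Zero

end IsTranslationCocycle

end

theorem stmt5_general {A B Γ : Type*} [AddZeroClass A] [AddZeroClass B] [CommGroup Γ]
    (lam : A → B) (m : A → B → Γ)
    (hm : ∀ (u u' : A) (x : B), m (u + u') x = m u x * m u' (x + lam u))
    (ψ : A → Γ) (hψ : ∀ u : A, ψ u = m u 0)
    (τ : A → B → Γ) (hτ : ∀ (u : A) (x : B), τ u x = m u x * (ψ u)⁻¹)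
    (hadd : ∀ (u : A) (x x' : B), τ u (x + x') = τ u x * τ u x') :
    (∀ x : B, m 0 x = 1) ∧ ψ 0 = 1 ∧ (∀ x : B, τ 0 x = 1) ∧
    (∀ (u u' : A) (x : B), τ (u + u') x = τ u x * τ u' x) ∧
    (∀ u u' : A, ψ (u + u') = ψ u * ψ u' * τ u' (lam u)) := by
  obtain rfl : ψ = originValue m := funext hψ
  obtain rfl : τ = originRatio m := funext₂ fun u x => (hτ u x).trans (div_eq_mul_inv _ _).symm
  have hcocycle : IsTranslationCocycle lam m := hm
  exact ⟨hcocycle.apply_zero hadd, hcocycle.originValue_zero hadd,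
    hcocycle.originRatio_zero_left hadd, hcocycle.originRatio_add_left hadd,
    hcocycle.originValue_add⟩

theorem stmt5 (A B : Type*) [AddCommGroup A] [AddCommGroup B] (Γ : Type*) [CommGroup Γ]
    (lam : A →+ B) (m : A → B → Γ)
    (hm : ∀ (u u' : A) (x : B), m (u + u') x = m u x * m u' (x + lam u))
    (ψ : A → Γ) (hψ : ∀ u : A, ψ u = m u 0)
    (τ : A → B → Γ) (hτ : ∀ (u : A) (x : B), τ u x = m u x * (ψ u)⁻¹)
    (hadd : ∀ (u : A) (x x' : B), τ u (x + x') = τ u x * τ u x') :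
    -- (a) normalization
    (∀ x : B, m 0 x = 1) ∧ ψ 0 = 1 ∧ (∀ x : B, τ 0 x = 1) ∧
    -- (b) `τ` is also additive in the first variable (hence biadditive)
    (∀ (u u' : A) (x : B), τ (u + u') x = τ u x * τ u' x) ∧
    -- (c) the quasi-quadratic functional equation for `ψ`
    (∀ u u' : A, ψ (u + u') = ψ u * ψ u' * τ u' (lam u)) :=
  stmt5_general lam m hm ψ hψ τ hτ hadd
end

section
/- Let V be a finite-dimensional real vector space (with its standard topology), C ⊆ V a closed convex set with 0 in the interior of C, L an abelian group, and μ*: L → V an injective homomorphism such that the translates μ*(v) + C (v ∈ L) have pairwise disjoint interiors. Fix α ∈ C and let Star(α) := ⋃ {μ*(v) + C : v ∈ L, α ∈ μ*(v) + C}, and for n ≥ 1 let nStar(α) denote the n-fold sumset. Then: (a) if m ≥ 4 is an integer, w ∈ L, and (μ*(mw) + Star(α)) ∩ Star(α) ≠ ∅, then w = 0; (b) more generally, if m, n are positive integers with m ≥ 4n, x ∈ nStar(α), and x + μ*(mw) ∈ nStar(α) for some w ∈ L, then w = 0. -/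
/-!
Statement 7: For a closed convex set `C` with `0` in its interior in a finite-dimensional
real vector space, and an injective homomorphism `μ* : L → V` whose translates `μ*(v) + C`
have pairwise disjoint interiors, points of `Star(α)` (resp. `nStar(α)`) that differ by
`μ*(m·w)` with `m ≥ 4` (resp. `m ≥ 4n`) force `w = 0`.
-/

open Pointwise

namespace Stmt7

/-- The `n`-fold sumset `nS = {s₁ + ⋯ + s_n : sᵢ ∈ S}`. -/
def sumset {V : Type*} [AddCommMonoid V] (n : ℕ) (S : Set V) : Set V :=
  {x | ∃ f : Fin n → V, (∀ i, f i ∈ S) ∧ x = ∑ i, f i}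

/-!
Translates of `C` that contain `α` have the form `α + (C - a)` with `a ∈ C`, so any two points of
`nStar(α)` differ by an element of `2nC - 2nC`. If `μ (m • w)` is such a difference and `2n < m`,
then, since the `2n`-fold sumset of the convex set `C` is the dilation `(2n) • C`, dividing by `m`
shrinks it towards the interior point `0` and gives `μ w = p - q` with `p, q ∈ interior C`. Thus
`p` is interior to both `C` and `μ w + C`, which forces `w = 0`. The condition `2n < m` is sharp:
for the tiling of `ℝ` by the unit intervals centred at the integers and `α = 1 / 2`, the endpoints
of `Star(α) = [-1 / 2, 3 / 2]` differ by `2 = μ (2 • 1)`.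
-/

theorem sumset_eq_nsmul {V : Type*} [AddCommMonoid V] (n : ℕ) (S : Set V) :
    sumset n S = n • S := by
  ext x
  simp only [sumset, Set.mem_ofPred_eq, Set.mem_nsmul_iff_sum, eq_comm (a := x)]

section Star

variable {V : Type*} [AddCommGroup V]

/-- The star of `α`, written `Star(α)` in the paper: the union of those translates `μ v + C` that
contain `α`. The translation vectors form an arbitrary family rather than a subgroup of `V`. -/
def tileStar {ι : Type*} (μ : ι → V) (C : Set V) (α : V) : Set V :=
  {x | ∃ v, α ∈ μ v +ᵥ C ∧ x ∈ μ v +ᵥ C}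

variable {ι : Type*} {μ : ι → V} {C : Set V} {α : V}

theorem exists_eq_add_sub_of_mem_tileStar {x : V}
    (hx : x ∈ tileStar μ C α) : ∃ a ∈ C, ∃ c ∈ C, x = α + (c - a) := by
  obtain ⟨v, ⟨a, ha, rfl⟩, ⟨c, hc, rfl⟩⟩ := hx
  exact ⟨a, ha, c, hc, by simp only [vadd_eq_add]; abel⟩

theorem tileStar_sub_tileStar_subset :
    tileStar μ C α - tileStar μ C α ⊆ 2 • C - 2 • C := by
  rintro _ ⟨x, hx, y, hy, rfl⟩
  obtain ⟨a, ha, c, hc, rfl⟩ := exists_eq_add_sub_of_mem_tileStar hx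
  obtain ⟨b, hb, d, hd, rfl⟩ := exists_eq_add_sub_of_mem_tileStar hy
  rw [two_nsmul]
  exact ⟨c + b, Set.add_mem_add hc hb, d + a, Set.add_mem_add hd ha, by dsimp only; abel⟩

theorem nsmul_tileStar_sub_nsmul_tileStar_subset (n : ℕ) :
    n • tileStar μ C α - n • tileStar μ C α ⊆ (2 * n) • C - (2 * n) • C :=
  calc
    n • tileStar μ C α - n • tileStar μ C α = n • (tileStar μ C α - tileStar μ C α) :=
      (nsmul_sub _ _ n).symm
    _ ⊆ n • (2 • C - 2 • C) := Set.nsmul_subset_nsmul_left tileStar_sub_tileStar_subset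
    _ = (2 * n) • C - (2 * n) • C := by rw [nsmul_sub, mul_nsmul]

end Star

section Convex

variable {𝕜 V : Type*} [Field 𝕜] [LinearOrder 𝕜] [IsStrictOrderedRing 𝕜]
  [AddCommGroup V] [Module 𝕜 V] {C : Set V}

-- On the left is the `n`-fold sumset, on the right the dilation by the scalar `n`.
theorem nsmul_eq_cast_smul_of_convex (hconv : Convex 𝕜 C) (hne : C.Nonempty) (n : ℕ) :
    n • C = (n : 𝕜) • C := by
  induction n with
  | zero => rw [zero_nsmul, Nat.cast_zero, Set.zero_smul_set hne]
  | succ n ih =>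
    rw [succ_nsmul, ih, Nat.cast_succ, hconv.add_smul n.cast_nonneg zero_le_one, one_smul]

variable [TopologicalSpace V] [IsTopologicalAddGroup V] [ContinuousConstSMul 𝕜 V]

theorem smul_subset_smul_interior_of_lt (hconv : Convex 𝕜 C) (h0 : 0 ∈ interior C) {s t : 𝕜}
    (hs : 0 ≤ s) (hst : s < t) : s • C ⊆ t • interior C := by
  have ht : 0 < t := hs.trans_lt hst
  rintro _ ⟨c, hc, rfl⟩
  have hmem : (1 - s / t) • (0 : V) + (s / t) • c ∈ interior C :=
    hconv.combo_interior_self_mem_interior h0 hc (sub_pos.2 ((div_lt_one ht).2 hst))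
      (div_nonneg hs ht.le) (sub_add_cancel _ _)
  rw [smul_zero, zero_add, div_eq_inv_mul, mul_smul] at hmem
  exact (Set.mem_smul_set_iff_inv_smul_mem₀ ht.ne' _ _).2 hmem

theorem mem_interior_sub_interior_of_nsmul_mem (hconv : Convex 𝕜 C) (h0 : 0 ∈ interior C)
    {k m : ℕ} (hkm : k < m) {x : V} (hx : m • x ∈ k • C - k • C) :
    x ∈ interior C - interior C := by
  have hsub : k • C ⊆ (m : 𝕜) • interior C := by
    rw [nsmul_eq_cast_smul_of_convex hconv ⟨0, interior_subset h0⟩]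
    exact smul_subset_smul_interior_of_lt hconv h0 k.cast_nonneg (Nat.cast_lt.2 hkm)
  have hm : (m : 𝕜) ≠ 0 := Nat.cast_ne_zero.2 (Nat.ne_zero_of_lt hkm)
  obtain ⟨_, ⟨p, hp, rfl⟩, _, ⟨q, hq, rfl⟩, hpq⟩ := Set.sub_subset_sub hsub hsub hx
  have hsmul : (m : 𝕜) • (p - q) = (m : 𝕜) • x := by
    rw [smul_sub, Nat.cast_smul_eq_nsmul 𝕜 m x]
    exact hpq
  exact ⟨p, hp, q, hq, smul_right_injective V hm hsmul⟩

end Convex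

theorem not_disjoint_interior_vadd {V : Type*} [AddGroup V] [TopologicalSpace V]
    [ContinuousConstVAdd V V] {C : Set V} {v : V} (hv : v ∈ interior C - interior C) :
    ¬Disjoint (interior (v +ᵥ C)) (interior C) := by
  obtain ⟨p, hp, q, hq, rfl⟩ := hv
  rw [interior_vadd]
  exact Set.not_disjoint_iff.2 ⟨p, ⟨q, hq, sub_add_cancel p q⟩, hp⟩

section Tiling

variable {𝕜 V L : Type*} [Field 𝕜] [LinearOrder 𝕜] [IsStrictOrderedRing 𝕜]
  [AddCommGroup V] [Module 𝕜 V] [TopologicalSpace V] [IsTopologicalAddGroup V]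
  [ContinuousConstSMul 𝕜 V] [AddMonoid L] {C : Set V} {μ : L →+ V}

theorem eq_zero_of_mem_nsmul_tileStar (hconv : Convex 𝕜 C) (h0 : 0 ∈ interior C)
    (hdisj : ∀ v v' : L, v ≠ v' → Disjoint (interior (μ v +ᵥ C)) (interior (μ v' +ᵥ C)))
    {α x : V} {m n : ℕ} {w : L} (hmn : 2 * n < m) (hx : x ∈ n • tileStar μ C α)
    (hy : x + μ (m • w) ∈ n • tileStar μ C α) : w = 0 := by
  have hdiff : m • μ w ∈ (2 * n) • C - (2 * n) • C := by
    rw [← map_nsmul, ← add_sub_cancel_left x (μ (m • w))]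
    exact nsmul_tileStar_sub_nsmul_tileStar_subset n (Set.sub_mem_sub hy hx)
  have hw : μ w ∈ interior C - interior C :=
    mem_interior_sub_interior_of_nsmul_mem hconv h0 hmn hdiff
  by_contra hne
  exact not_disjoint_interior_vadd hw (by simpa only [map_zero, zero_vadd] using hdisj w 0 hne)

theorem stmt7_general (hconv : Convex 𝕜 C) (h0 : 0 ∈ interior C)
    (hdisj : ∀ v v' : L, v ≠ v' → Disjoint (interior (μ v +ᵥ C)) (interior (μ v' +ᵥ C)))
    (α : V) :
    (∀ (m : ℕ) (w : L), 2 < m →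
      ((μ (m • w) +ᵥ tileStar μ C α) ∩ tileStar μ C α).Nonempty → w = 0) ∧
    (∀ (m n : ℕ) (w : L) (x : V), 2 * n < m → x ∈ sumset n (tileStar μ C α) →
      x + μ (m • w) ∈ sumset n (tileStar μ C α) → w = 0) := by
  simp only [sumset_eq_nsmul]
  refine ⟨?_, fun m n w x hmn hx hy => eq_zero_of_mem_nsmul_tileStar hconv h0 hdisj hmn hx hy⟩
  rintro m w hm ⟨_, ⟨x, hx, rfl⟩, hy⟩
  have hy' : x + μ (m • w) ∈ tileStar μ C α := add_comm (μ (m • w)) x ▸ hy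
  rw [← one_nsmul (tileStar μ C α)] at hx hy'
  exact eq_zero_of_mem_nsmul_tileStar hconv h0 hdisj hm hx hy'

end Tiling

theorem stmt7 (V : Type*) [NormedAddCommGroup V] [NormedSpace ℝ V] [FiniteDimensional ℝ V]
    (C : Set V) (hclosed : IsClosed C) (hconv : Convex ℝ C) (h0 : (0 : V) ∈ interior C)
    (L : Type*) [AddCommGroup L] (μ : L →+ V) (hinj : Function.Injective μ)
    (hdisj : ∀ v v' : L, v ≠ v' →
      Disjoint (interior (μ v +ᵥ C)) (interior (μ v' +ᵥ C)))
    (α : V) (hα : α ∈ C) :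
    -- (a)
    (∀ (m : ℕ) (w : L), 4 ≤ m →
      ((μ (m • w) +ᵥ {x : V | ∃ v : L, α ∈ μ v +ᵥ C ∧ x ∈ μ v +ᵥ C}) ∩
        {x : V | ∃ v : L, α ∈ μ v +ᵥ C ∧ x ∈ μ v +ᵥ C}).Nonempty → w = 0) ∧
    -- (b)
    (∀ (m n : ℕ) (w : L) (x : V), 0 < m → 0 < n → 4 * n ≤ m →
      x ∈ sumset n {x : V | ∃ v : L, α ∈ μ v +ᵥ C ∧ x ∈ μ v +ᵥ C} →
      x + μ (m • w) ∈ sumset n {x : V | ∃ v : L, α ∈ μ v +ᵥ C ∧ x ∈ μ v +ᵥ C} →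
      w = 0) := by
  have hstar := stmt7_general hconv h0 hdisj α
  exact ⟨fun m w hm => hstar.1 m w (by omega), fun m n w x _ _ hmn => hstar.2 m n w x (by omega)⟩

end Stmt7
end

section
/- Let Δ ⊆ ℝ^d be the convex hull of a finite subset of ℤ^d, of dimension r, and let α ∈ ℤ^d be a vertex (extreme point) of Δ. Let C := Cone(Δ − α) be the convex cone generated by Δ − α. Call w ∈ C ∩ ℤ^d primitive if w ≠ 0 and w cannot be written as w = v + v′ with v, v′ ∈ C ∩ ℤ^d both nonzero. Then every primitive element of C ∩ ℤ^d belongs to the r-fold sumset r(Δ − α) := {(x₁ − α) + ⋯ + (x_r − α) : xᵢ ∈ Δ}. -/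
/-!
Statement 10: For a lattice polytope `Δ ⊆ ℝ^d` of dimension `r` with lattice vertex `α`,
every primitive element of `Cone(Δ − α) ∩ ℤ^d` lies in the `r`-fold sumset `r(Δ − α)`.
-/

namespace Stmt10

/-- `x` is a point of `ℤ^d ⊆ ℝ^d`. -/
def IsLatticePt {d : ℕ} (x : Fin d → ℝ) : Prop := ∀ i, ∃ z : ℤ, x i = (z : ℝ)

/-- The convex cone generated by `S`: all finite nonnegative real combinations. -/
def coneOf {d : ℕ} (S : Set (Fin d → ℝ)) : Set (Fin d → ℝ) :=
  {x | ∃ (n : ℕ) (c : Fin n → ℝ) (v : Fin n → (Fin d → ℝ)),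
    (∀ i, 0 ≤ c i) ∧ (∀ i, v i ∈ S) ∧ x = ∑ i, c i • v i}

/-- The `n`-fold sumset `nS = {s₁ + ⋯ + s_n : sᵢ ∈ S}`. -/
def sumset {d : ℕ} (n : ℕ) (S : Set (Fin d → ℝ)) : Set (Fin d → ℝ) :=
  {x | ∃ f : Fin n → (Fin d → ℝ), (∀ i, f i ∈ S) ∧ x = ∑ i, f i}

/-!
By Carathéodory's theorem for cones, an element `w` of the cone is a combination `∑ c e • e` with
`c e ≥ 0` of linearly independent lattice vectors `e = s - α`, `s ∈ S`; at most `r` of them occur.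
If some `c e > 1`, then `w = e + (w - e)` decomposes `w` inside the cone, with `w - e ≠ 0` by
linear independence. So for primitive `w` every `c e • e` lies on the segment from `0` to `e`,
hence in `Δ - α`, and adding copies of `0` makes the number of summands exactly `r`.
-/

open scoped Pointwise

section OrderedSemiring

variable {R E : Type*} [Semiring R] [PartialOrder R] [IsOrderedRing R] [AddCommMonoid E]
  [Module R E]

lemma mem_hull_finset {t : Finset E} {x : E} :
    x ∈ PointedCone.hull R (t : Set E) ↔
      ∃ c : E → R, (∀ e ∈ t, 0 ≤ c e) ∧ ∑ e ∈ t, c e • e = x := by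
  constructor
  · intro hx
    obtain ⟨c, -, rfl⟩ := Submodule.mem_span_finset.mp hx
    exact ⟨fun e => c e, fun e _ => (c e).2, rfl⟩
  · rintro ⟨c, hc, rfl⟩
    exact sum_mem fun e he => PointedCone.smul_mem _ (hc e he) (PointedCone.subset_hull he)

lemma hull_convexHull (s : Set E) :
    PointedCone.hull R (convexHull R s) = PointedCone.hull R s :=
  le_antisymm
    (Submodule.span_le.mpr <| convexHull_min PointedCone.subset_hull (PointedCone.convex _))
    (Submodule.span_mono (subset_convexHull R s))

end OrderedSemiring

lemma span_image_vsub_eq_direction_affineSpan {k V P : Type*} [Ring k] [AddCommGroup V]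
    [Module k V] [AddTorsor V P] {s : Set P} {p : P} (hp : p ∈ affineSpan k s) :
    Submodule.span k ((· -ᵥ p) '' s) = (affineSpan k s).direction := by
  rw [← affineSpan_insert_eq_affineSpan k hp, direction_affineSpan,
    vectorSpan_eq_span_vsub_set_right k (Set.mem_insert p s), Set.image_insert_eq, vsub_self,
    Submodule.span_insert_zero]

lemma exists_fin_sum_eq_of_card_le {ι M : Type*} [AddCommMonoid M] {A : Set M} (h0 : 0 ∈ A)
    {t : Finset ι} {g : ι → M} (hg : ∀ i ∈ t, g i ∈ A) {n : ℕ} (hn : t.card ≤ n) :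
    ∃ f : Fin n → M, (∀ k, f k ∈ A) ∧ ∑ i ∈ t, g i = ∑ k, f k := by
  obtain ⟨m, rfl⟩ := Nat.exists_eq_add_of_le hn
  refine ⟨Fin.append (fun k => g (t.equivFin.symm k)) 0, fun k => ?_, ?_⟩
  · refine Fin.addCases (fun k => ?_) (fun k => ?_) k
    · simpa only [Fin.append_left] using hg _ (t.equivFin.symm k).2
    · simpa only [Fin.append_right, Pi.zero_apply] using h0
  · simp only [Fin.sum_univ_add, Fin.append_left, Fin.append_right, Pi.zero_apply,
      Finset.sum_const_zero, add_zero]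
    rw [t.equivFin.symm.sum_comp (fun i : t => g i), t.sum_coe_sort g]

section OrderedField

variable {𝕜 E : Type*} [Field 𝕜] [LinearOrder 𝕜] [IsStrictOrderedRing 𝕜] [AddCommGroup E]
  [Module 𝕜 E]

lemma exists_sum_smul_eq_zero_and_pos {t : Finset E}
    (ht : ¬ LinearIndepOn 𝕜 id (t : Set E)) :
    ∃ g : E → 𝕜, ∑ e ∈ t, g e • e = 0 ∧ ∃ e ∈ t, 0 < g e := by
  rw [linearIndepOn_finset_iff] at ht
  push Not at ht
  obtain ⟨g, hg, e, he, hne⟩ := ht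
  rcases hne.lt_or_gt with hneg | hpos
  · exact ⟨-g, by simpa using hg, e, he, neg_pos.mpr hneg⟩
  · exact ⟨g, hg, e, he, hpos⟩

lemma exists_mem_hull_erase [DecidableEq E] {t : Finset E}
    (ht : ¬ LinearIndepOn 𝕜 id (t : Set E)) {x : E} (hx : x ∈ PointedCone.hull 𝕜 (t : Set E)) :
    ∃ i ∈ t, x ∈ PointedCone.hull 𝕜 (t.erase i : Set E) := by
  obtain ⟨c, hc, rfl⟩ := mem_hull_finset.mp hx
  obtain ⟨g, hg, j, hj, hgj⟩ := exists_sum_smul_eq_zero_and_pos ht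
  obtain ⟨i, hi, hmin⟩ := (t.filter fun e => 0 < g e).exists_min_image (fun e => c e / g e)
    ⟨j, Finset.mem_filter.mpr ⟨hj, hgj⟩⟩
  obtain ⟨hit, hgi⟩ := Finset.mem_filter.mp hi
  -- Subtracting the least ratio `c e / g e` times the relation `g` keeps all coefficients
  -- nonnegative and kills the one where the minimum is attained.
  let k : E → 𝕜 := fun e => c e - c i / g i * g e
  have hki : k i = 0 := by simp only [k, div_mul_cancel₀ _ hgi.ne', sub_self]
  have hk : ∀ e ∈ t, 0 ≤ k e := by
    intro e he
    rw [sub_nonneg]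
    rcases lt_or_ge 0 (g e) with hpos | hnonpos
    · exact (le_div_iff₀ hpos).mp (hmin e (Finset.mem_filter.mpr ⟨he, hpos⟩))
    · exact (mul_nonpos_of_nonneg_of_nonpos (div_nonneg (hc i hit) hgi.le) hnonpos).trans (hc e he)
  refine ⟨i, hit, mem_hull_finset.mpr ⟨k, fun e he => hk e (Finset.mem_of_mem_erase he), ?_⟩⟩
  rw [Finset.sum_erase t (by rw [hki, zero_smul])]
  simp only [k, sub_smul, mul_smul, Finset.sum_sub_distrib, ← Finset.smul_sum, hg, smul_zero,
    sub_zero]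

theorem exists_linearIndepOn_mem_hull {s : Set E} {x : E} (hx : x ∈ PointedCone.hull 𝕜 s) :
    ∃ t : Finset E, ↑t ⊆ s ∧ LinearIndepOn 𝕜 id (t : Set E) ∧
      x ∈ PointedCone.hull 𝕜 (t : Set E) := by
  classical
  obtain ⟨t, hts, hxt⟩ := Submodule.mem_span_finite_of_mem_span hx
  induction t using Finset.strongInduction with
  | H t ih =>
    by_cases hli : LinearIndepOn 𝕜 id (t : Set E)
    · exact ⟨t, hts, hli, hxt⟩
    · obtain ⟨i, hi, hxi⟩ := exists_mem_hull_erase hli hxt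
      exact ih _ (Finset.erase_ssubset hi)
        ((Finset.coe_subset.mpr (t.erase_subset i)).trans hts) hxi

lemma coeff_le_one_of_isAddIndecomposable {C : PointedCone 𝕜 E} {L : AddSubgroup E}
    {t : Finset E} (htC : (t : Set E) ⊆ C ∩ L) (hli : LinearIndepOn 𝕜 id (t : Set E))
    {c : E → 𝕜} (hc : ∀ e ∈ t, 0 ≤ c e)
    (hw : IsAddIndecomposable id (C ∩ L : Set E) (∑ e ∈ t, c e • e)) {u : E} (hu : u ∈ t) :
    c u ≤ 1 := by
  classical
  by_contra! hcu
  set w := ∑ e ∈ t, c e • e with hw_def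
  have hsingle : ∑ e ∈ t, (Pi.single u 1 : E → 𝕜) e • e = u := by
    simp [Pi.single_apply, hu]
  have hsub_mem : w - u ∈ C := by
    have hsplit : w - u = (c u - 1) • u + ∑ e ∈ t.erase u, c e • e := by
      rw [hw_def, ← Finset.add_sum_erase t _ hu, sub_smul, one_smul]
      abel
    rw [hsplit]
    exact add_mem (C.smul_mem (sub_nonneg.mpr hcu.le) (htC hu).1)
      (sum_mem fun e he => C.smul_mem (hc e (Finset.mem_of_mem_erase he))
        (htC (Finset.mem_of_mem_erase he)).1)
  have hu_ne : u ≠ 0 := hli.ne_zero hu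
  have hsub_ne : w - u ≠ 0 := by
    intro h
    have hcoeff : c u = (Pi.single u 1 : E → 𝕜) u :=
      linearIndepOn_finset_iffₛ.mp hli c _ ((sub_eq_zero.mp h).trans hsingle.symm) u hu
    rw [Pi.single_eq_same] at hcoeff
    exact hcu.ne' hcoeff
  rcases hw.2 u (htC hu) (w - u) ⟨hsub_mem, sub_mem hw.1.2 (htC hu).2⟩
    (add_sub_cancel u w).symm with h | h
  · exact hu_ne h
  · exact hsub_ne h

theorem exists_fin_sum_eq_of_isAddIndecomposable_hull {L : AddSubgroup E} {T : Set E}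
    (hTL : T ⊆ L) (h0 : 0 ∈ convexHull 𝕜 T) [FiniteDimensional 𝕜 (Submodule.span 𝕜 T)] {w : E}
    (hw : IsAddIndecomposable id (PointedCone.hull 𝕜 T ∩ L : Set E) w) :
    ∃ f : Fin (Module.finrank 𝕜 (Submodule.span 𝕜 T)) → E,
      (∀ i, f i ∈ convexHull 𝕜 T) ∧ w = ∑ i, f i := by
  obtain ⟨t, htT, hli, hwt⟩ := exists_linearIndepOn_mem_hull hw.1.1
  obtain ⟨c, hc, rfl⟩ := mem_hull_finset.mp hwt
  have hc_le : ∀ e ∈ t, c e ≤ 1 := fun e he =>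
    coeff_le_one_of_isAddIndecomposable
      (fun e he => ⟨PointedCone.subset_hull (htT he), hTL (htT he)⟩) hli hc hw he
  have hcard : t.card ≤ Module.finrank 𝕜 (Submodule.span 𝕜 T) := by
    rw [← finrank_span_finset_eq_card hli]
    exact Submodule.finrank_mono (Submodule.span_mono htT)
  refine exists_fin_sum_eq_of_card_le h0 (fun e he => ?_) hcard
  exact (convex_convexHull 𝕜 T).smul_mem_of_zero_mem h0 (subset_convexHull 𝕜 T (htT he))
    ⟨hc e he, hc_le e he⟩

theorem stmt10_general {L : AddSubgroup E} {S : Set E} (hSL : S ⊆ L)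
    [FiniteDimensional 𝕜 (affineSpan 𝕜 (convexHull 𝕜 S)).direction] {r : ℕ}
    (hr : Module.finrank 𝕜 (affineSpan 𝕜 (convexHull 𝕜 S)).direction = r)
    {α : E} (hαL : α ∈ L) (hα : α ∈ convexHull 𝕜 S) {w : E}
    (hw : IsAddIndecomposable id
      (PointedCone.hull 𝕜 ((fun x => x - α) '' convexHull 𝕜 S) ∩ L : Set E) w) :
    ∃ f : Fin r → E, (∀ i, f i ∈ (fun x => x - α) '' convexHull 𝕜 S) ∧ w = ∑ i, f i := by
  have hconv : (fun x => x - α) '' convexHull 𝕜 S = convexHull 𝕜 ((fun x => x - α) '' S) := by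
    rw [← Set.sub_singleton, ← Set.sub_singleton, convexHull_sub, convexHull_singleton]
  have hdir : (affineSpan 𝕜 (convexHull 𝕜 S)).direction =
      Submodule.span 𝕜 ((fun x => x - α) '' S) := by
    rw [affineSpan_convexHull]
    exact (span_image_vsub_eq_direction_affineSpan (convexHull_subset_affineSpan S hα)).symm
  have hTL : (fun x => x - α) '' S ⊆ L :=
    Set.image_subset_iff.mpr fun x hx => sub_mem (hSL hx) hαL
  have h0 : (0 : E) ∈ convexHull 𝕜 ((fun x => x - α) '' S) := hconv ▸ ⟨α, hα, sub_self α⟩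
  have : FiniteDimensional 𝕜 (Submodule.span 𝕜 ((fun x => x - α) '' S)) := by
    rwa [← hdir]
  rw [hconv, hull_convexHull] at hw
  rw [hconv, ← hr, hdir]
  exact exists_fin_sum_eq_of_isAddIndecomposable_hull hTL h0 hw

end OrderedField

lemma coneOf_eq_hull {d : ℕ} (A : Set (Fin d → ℝ)) : coneOf A = PointedCone.hull ℝ A := by
  ext x
  constructor
  · rintro ⟨n, c, v, hc, hv, rfl⟩
    exact sum_mem fun i _ => PointedCone.smul_mem _ (hc i) (PointedCone.subset_hull (hv i))
  · intro hx
    obtain ⟨n, c, v, rfl⟩ := Submodule.mem_span_set'.mp hx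
    exact ⟨n, fun i => c i, fun i => v i, fun i => (c i).2, fun i => (v i).2, rfl⟩

/-- The lattice `ℤ^d ⊆ ℝ^d`, as a subgroup. -/
def integerLattice (d : ℕ) : AddSubgroup (Fin d → ℝ) where
  carrier := {x | IsLatticePt x}
  zero_mem' _ := ⟨0, by simp⟩
  add_mem' hx hy i := by
    obtain ⟨a, ha⟩ := hx i
    obtain ⟨b, hb⟩ := hy i
    exact ⟨a + b, by simp [ha, hb]⟩
  neg_mem' hx i := by
    obtain ⟨a, ha⟩ := hx i
    exact ⟨-a, by simp [ha]⟩

lemma isAddIndecomposable_of_not_exists_add {d : ℕ} {A : Set (Fin d → ℝ)} {w : Fin d → ℝ}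
    (hw : w ∈ coneOf A) (hwlat : IsLatticePt w)
    (hprim : ¬ ∃ v v' : Fin d → ℝ, v ∈ coneOf A ∧ IsLatticePt v ∧ v ≠ 0 ∧
      v' ∈ coneOf A ∧ IsLatticePt v' ∧ v' ≠ 0 ∧ w = v + v') :
    IsAddIndecomposable id (PointedCone.hull ℝ A ∩ integerLattice d : Set (Fin d → ℝ)) w := by
  rw [coneOf_eq_hull] at hw hprim
  refine ⟨⟨hw, hwlat⟩, fun v hv v' hv' hadd => ?_⟩
  by_contra! hne
  exact hprim ⟨v, v', hv.1, hv.2, hne.1, hv'.1, hv'.2, hne.2, hadd⟩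

theorem stmt10 (d r : ℕ) (S : Set (Fin d → ℝ)) (hfin : S.Finite)
    (hlat : ∀ x ∈ S, IsLatticePt x)
    -- `r` is the dimension of `Δ = conv(S)`
    (hr : Module.finrank ℝ (affineSpan ℝ (convexHull ℝ S)).direction = r)
    -- `α ∈ ℤ^d` is a vertex (extreme point) of `Δ`
    (α : Fin d → ℝ) (hαlat : IsLatticePt α)
    (hα : α ∈ Set.extremePoints ℝ (convexHull ℝ S)) :
    ∀ w : Fin d → ℝ,
      w ∈ coneOf ((fun x => x - α) '' convexHull ℝ S) → IsLatticePt w → w ≠ 0 →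
      -- `w` is primitive in `Cone(Δ − α) ∩ ℤ^d`
      (¬ ∃ v v' : Fin d → ℝ,
        v ∈ coneOf ((fun x => x - α) '' convexHull ℝ S) ∧ IsLatticePt v ∧ v ≠ 0 ∧
        v' ∈ coneOf ((fun x => x - α) '' convexHull ℝ S) ∧ IsLatticePt v' ∧ v' ≠ 0 ∧
        w = v + v') →
      w ∈ sumset r ((fun x => x - α) '' convexHull ℝ S) := by
  intro w hw hwlat _ hprim
  exact stmt10_general (L := integerLattice d) hlat hr hαlat hα.1
    (isAddIndecomposable_of_not_exists_add hw hwlat hprim)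

end Stmt10
end

section
/- Let Δ ⊆ ℝ^d be the convex hull of a finite subset of ℤ^d, of dimension r ≥ 1, and let α ∈ ℤ^d be a vertex (extreme point) of Δ. Let C := Cone(Δ − α) be the convex cone generated by Δ − α. Then for every integer m ≥ r, the additive submonoid of ℤ^d generated by the lattice points of the m-fold sumset m(Δ − α), i.e. by (m(Δ − α)) ∩ ℤ^d, equals C ∩ ℤ^d. -/
/-!
Statement 11: For a lattice polytope `Δ ⊆ ℝ^d` of dimension `r ≥ 1` with lattice vertex
`α` and `C = Cone(Δ − α)`, for every `m ≥ r` the additive submonoid of `ℤ^d` generated by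
the lattice points of the `m`-fold sumset `m(Δ − α)` equals `C ∩ ℤ^d`.
-/

namespace Stmt11

/-- `x` is a point of `ℤ^d ⊆ ℝ^d`. -/
def IsLatticePt {d : ℕ} (x : Fin d → ℝ) : Prop := ∀ i, ∃ z : ℤ, x i = (z : ℝ)

/-- The convex cone generated by `S`: all finite nonnegative real combinations. -/
def coneOf {d : ℕ} (S : Set (Fin d → ℝ)) : Set (Fin d → ℝ) :=
  {x | ∃ (n : ℕ) (c : Fin n → ℝ) (v : Fin n → (Fin d → ℝ)),
    (∀ i, 0 ≤ c i) ∧ (∀ i, v i ∈ S) ∧ x = ∑ i, c i • v i}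

/-- The `n`-fold sumset `nS = {s₁ + ⋯ + s_n : sᵢ ∈ S}`. -/
def sumset {d : ℕ} (n : ℕ) (S : Set (Fin d → ℝ)) : Set (Fin d → ℝ) :=
  {x | ∃ f : Fin n → (Fin d → ℝ), (∀ i, f i ∈ S) ∧ x = ∑ i, f i}

/-!
Translate so that `α = 0`, and let `T := S - α`, so that `Δ - α = conv T ∋ 0` has the same conical
hull as `T`. By the conical Carathéodory theorem, a lattice point `x` of the cone is
`∑ v ∈ t, c v • v` with `c ≥ 0` and `t ⊆ T` linearly independent, whence `#t ≤ r ≤ m`. Rounding the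
coefficients down splits off a sum of elements of `T`, each of which lies in `m(Δ - α)`. What
remains is `∑ v ∈ t, fract (c v) • v`: a lattice point, being a difference of two, and a sum of at
most `m` elements of the convex set `Δ - α ∋ 0`.
-/

open PointedCone

open scoped Pointwise

lemma card_le_of_linearIndepOn_of_rank_span_le {R M : Type*} [Semiring R] [StrongRankCondition R]
    [AddCommMonoid M] [Module R M] {T : Set M} {t : Finset M} {m : ℕ} (htT : ↑t ⊆ T)
    (ht : LinearIndepOn R id (t : Set M)) (hT : Module.rank R (Submodule.span R T) ≤ m) :
    t.card ≤ m := by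
  have hrank := (Submodule.rank_mono (Submodule.span_mono htT)).trans hT
  rwa [rank_span_set ht, SetLike.coe_sort_coe, Cardinal.mk_coe_finset, Nat.cast_le] at hrank

section OrderedRing

variable {R E : Type*} [Ring R] [LinearOrder R] [IsStrictOrderedRing R] [AddCommGroup E]
  [Module R E]

lemma mem_hull_finset {t : Finset E} {x : E} :
    x ∈ hull R (t : Set E) ↔ ∃ c : E → R, (∀ v ∈ t, 0 ≤ c v) ∧ ∑ v ∈ t, c v • v = x := by
  constructor
  · intro hx
    obtain ⟨c, -, rfl⟩ := Submodule.mem_span_finset.1 hx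
    exact ⟨fun v => c v, fun v _ => (c v).2, rfl⟩
  · rintro ⟨c, hc, rfl⟩
    exact sum_mem fun v hv => (hull R _).smul_mem (hc v hv) (subset_hull hv)

lemma hull_convexHull (T : Set E) : hull R (convexHull R T) = hull R T :=
  (Submodule.span_le.2 <| convexHull_min subset_hull (hull R T).convex).antisymm
    (Submodule.span_mono <| subset_convexHull R T)

lemma nsmul_subset_hull (n : ℕ) (A : Set E) : n • A ⊆ hull R A := by
  have closure_le : AddSubmonoid.closure A ≤ (hull R A).toAddSubmonoid :=
    AddSubmonoid.closure_le.2 subset_hull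
  exact AddSubmonoid.subset_closure.trans (AddSubmonoid.closure_nsmul_le.trans closure_le)

lemma exists_relation_pos_of_not_linearIndepOn {t : Finset E}
    (ht : ¬LinearIndepOn R id (t : Set E)) :
    ∃ g : E → R, ∑ v ∈ t, g v • v = 0 ∧ ∃ v ∈ t, 0 < g v := by
  obtain ⟨g, hg, v, hv, hne⟩ := not_linearIndepOn_finset_iff.1 ht
  rcases hne.lt_or_gt with hneg | hpos
  · exact ⟨-g, by simpa using hg, v, hv, by simpa using hneg⟩
  · exact ⟨g, hg, v, hv, hpos⟩

end OrderedRing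

section Caratheodory

variable {𝕜 E : Type*} [Field 𝕜] [LinearOrder 𝕜] [IsStrictOrderedRing 𝕜] [AddCommGroup E]
  [Module 𝕜 E]

lemma exists_mem_hull_erase [DecidableEq E] {t : Finset E} (ht : ¬LinearIndepOn 𝕜 id (t : Set E))
    {x : E} (hx : x ∈ hull 𝕜 (t : Set E)) : ∃ u ∈ t, x ∈ hull 𝕜 (t.erase u : Set E) := by
  obtain ⟨c, hc, rfl⟩ := mem_hull_finset.1 hx
  obtain ⟨g, hg, hpos⟩ := exists_relation_pos_of_not_linearIndepOn ht
  -- Subtract the largest multiple of the relation `g` that keeps all coefficients nonnegative;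
  -- the coefficient at the minimizer `u` of `c / g` then vanishes.
  obtain ⟨u, hu, hmin⟩ := Finset.exists_min_image {v ∈ t | 0 < g v} (fun v => c v / g v)
    (by simpa only [Finset.filter_nonempty_iff] using hpos)
  obtain ⟨hut, hgu⟩ := Finset.mem_filter.1 hu
  set q := c u / g u
  have hq : 0 ≤ q := div_nonneg (hc u hut) hgu.le
  refine ⟨u, hut, mem_hull_finset.2 ⟨fun v => c v - q * g v, fun v hv => ?_, ?_⟩⟩
  · have hvt := Finset.mem_of_mem_erase hv
    rw [sub_nonneg]
    rcases lt_or_ge 0 (g v) with hgv | hgv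
    · exact (le_div_iff₀ hgv).1 (hmin v (Finset.mem_filter.2 ⟨hvt, hgv⟩))
    · exact (mul_nonpos_of_nonneg_of_nonpos hq hgv).trans (hc v hvt)
  · have hu_zero : c u - q * g u = 0 := by rw [div_mul_cancel₀ _ hgu.ne', sub_self]
    rw [Finset.sum_erase t (by simp only [hu_zero, zero_smul])]
    simp only [sub_smul, mul_smul, Finset.sum_sub_distrib, ← Finset.smul_sum, hg, smul_zero,
      sub_zero]

/-- **Carathéodory's theorem** for convex cones. -/
theorem exists_linearIndepOn_mem_hull {T : Set E} {x : E} (hx : x ∈ hull 𝕜 T) :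
    ∃ t : Finset E, ↑t ⊆ T ∧ LinearIndepOn 𝕜 id (t : Set E) ∧ x ∈ hull 𝕜 (t : Set E) := by
  classical
  obtain ⟨s, hsT, hxs⟩ := Submodule.mem_span_finite_of_mem_span hx
  induction s using Finset.strongInduction with
  | H s ih =>
    by_cases hs : LinearIndepOn 𝕜 id (s : Set E)
    · exact ⟨s, hsT, hs, hxs⟩
    · obtain ⟨u, hu, hxu⟩ := exists_mem_hull_erase hs hxs
      have herase : s.erase u ⊂ s := Finset.erase_ssubset hu
      exact ih _ herase ((Finset.coe_subset.2 herase.subset).trans hsT) hxu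

end Caratheodory

section Lattice

variable {𝕜 E : Type*} [Field 𝕜] [LinearOrder 𝕜] [IsStrictOrderedRing 𝕜] [FloorRing 𝕜]
  [AddCommGroup E] [Module 𝕜 E]

lemma hull_finset_subset_closure_add_nsmul {A : Set E} (hA : Convex 𝕜 A) (h0 : (0 : E) ∈ A)
    {t : Finset E} (htA : ↑t ⊆ A) :
    (hull 𝕜 (t : Set E) : Set E) ⊆ AddSubmonoid.closure (t : Set E) + t.card • A := by
  intro x hx
  obtain ⟨c, hc, rfl⟩ := mem_hull_finset.1 hx
  have hsplit : ∑ v ∈ t, ⌊c v⌋₊ • v + ∑ v ∈ t, Int.fract (c v) • v = ∑ v ∈ t, c v • v := by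
    rw [← Finset.sum_add_distrib]
    refine Finset.sum_congr rfl fun v hv => ?_
    rw [← Nat.cast_smul_eq_nsmul 𝕜, ← add_smul, natCast_floor_eq_intCast_floor (hc v hv),
      Int.floor_add_fract]
  have hfract : ∑ v ∈ t, Int.fract (c v) • v ∈ t.card • A := by
    rw [← Finset.sum_const]
    exact Set.finsetSum_mem_finsetSum t _ _ fun v hv => hA.smul_mem_of_zero_mem h0 (htA hv)
      ⟨Int.fract_nonneg _, (Int.fract_lt_one _).le⟩
  rw [← hsplit]
  exact Set.add_mem_add
    (sum_mem fun v hv => nsmul_mem (AddSubmonoid.subset_closure hv) _) hfract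

theorem hull_inter_subset_closure_nsmul_convexHull {L : AddSubgroup E} {T : Set E} (hTL : T ⊆ L)
    (h0 : 0 ∈ convexHull 𝕜 T) {m : ℕ} (hm : Module.rank 𝕜 (Submodule.span 𝕜 T) ≤ m) :
    (hull 𝕜 T ∩ L : Set E) ⊆ AddSubmonoid.closure (m • convexHull 𝕜 T ∩ L) := by
  rintro x ⟨hxT, hxL⟩
  obtain ⟨t, htT, hlin, hxt⟩ := exists_linearIndepOn_mem_hull hxT
  have hcard : t.card ≤ m := card_le_of_linearIndepOn_of_rank_span_le htT hlin hm
  have htA : ↑t ⊆ convexHull 𝕜 T := htT.trans (subset_convexHull 𝕜 T)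
  obtain ⟨y, hy, z, hz, rfl⟩ :=
    hull_finset_subset_closure_add_nsmul (convex_convexHull 𝕜 T) h0 htA hxt
  have hyL : y ∈ L := (AddSubmonoid.closure_le (S := L.toAddSubmonoid)).2 (htT.trans hTL) hy
  have hzL : z ∈ L := (L.add_mem_cancel_left hyL).1 hxL
  have hgen : (t : Set E) ⊆ m • convexHull 𝕜 T ∩ L := fun v hv => by
    have hm1 : 1 ≤ m := (Finset.card_pos.2 ⟨v, hv⟩).trans_le hcard
    exact ⟨Set.nsmul_subset_nsmul_right h0 hm1 (by simpa only [one_nsmul] using htA hv),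
      hTL (htT hv)⟩
  exact add_mem (AddSubmonoid.closure_mono hgen hy)
    (AddSubmonoid.subset_closure ⟨Set.nsmul_subset_nsmul_right h0 hcard hz, hzL⟩)

theorem closure_nsmul_convexHull_inter {L : AddSubgroup E} {T : Set E} (hTL : T ⊆ L)
    (h0 : 0 ∈ convexHull 𝕜 T) {m : ℕ} (hm : Module.rank 𝕜 (Submodule.span 𝕜 T) ≤ m) :
    (AddSubmonoid.closure (m • convexHull 𝕜 T ∩ L) : Set E) = (hull 𝕜 T : Set E) ∩ L := by
  refine Set.Subset.antisymm ?_ (hull_inter_subset_closure_nsmul_convexHull hTL h0 hm)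
  refine (AddSubmonoid.closure_le (S := (hull 𝕜 T).toAddSubmonoid ⊓ L.toAddSubmonoid)).2
    (Set.inter_subset_inter_left _ ?_)
  exact (nsmul_subset_hull m _).trans (hull_convexHull T).le

theorem stmt11_general {L : AddSubgroup E} {S : Set E} (hS : S ⊆ L) {α : E} (hαL : α ∈ L)
    (hα : α ∈ convexHull 𝕜 S) {m : ℕ}
    (hm : Module.rank 𝕜 (affineSpan 𝕜 (convexHull 𝕜 S)).direction ≤ m) :
    (AddSubmonoid.closure (m • ((fun x => x - α) '' convexHull 𝕜 S) ∩ L) : Set E) =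
      (hull 𝕜 ((fun x => x - α) '' convexHull 𝕜 S) : Set E) ∩ L := by
  have himage : (fun x => x - α) '' convexHull 𝕜 S = convexHull 𝕜 ((fun x => x - α) '' S) := by
    simpa only [Set.sub_singleton, convexHull_singleton] using (convexHull_sub S {α}).symm
  have hspan : Submodule.span 𝕜 ((fun x => x - α) '' S) ≤
      (affineSpan 𝕜 (convexHull 𝕜 S)).direction := by
    rw [direction_affineSpan, vectorSpan_eq_span_vsub_set_right 𝕜 hα]
    exact Submodule.span_mono (Set.image_mono (subset_convexHull 𝕜 S))
  rw [himage, hull_convexHull]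
  refine closure_nsmul_convexHull_inter ?_ ?_ ((Submodule.rank_mono hspan).trans hm)
  · exact Set.image_subset_iff.2 fun x hx => L.sub_mem (hS hx) hαL
  · exact himage ▸ ⟨α, hα, sub_self α⟩

end Lattice

/-- The lattice `ℤ^d` as an additive subgroup of `ℝ^d`, with carrier given by `IsLatticePt` so that
membership unfolds to it definitionally. -/
def latticeSubgroup (d : ℕ) : AddSubgroup (Fin d → ℝ) where
  carrier := {x | IsLatticePt x}
  zero_mem' _ := ⟨0, by simp⟩
  add_mem' hx hy i := by
    obtain ⟨a, ha⟩ := hx i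
    obtain ⟨b, hb⟩ := hy i
    exact ⟨a + b, by simp [ha, hb]⟩
  neg_mem' hx i := by
    obtain ⟨a, ha⟩ := hx i
    exact ⟨-a, by simp [ha]⟩

lemma coneOf_eq_hull {d : ℕ} (A : Set (Fin d → ℝ)) : coneOf A = hull ℝ A := by
  ext x
  constructor
  · rintro ⟨n, c, v, hc, hv, rfl⟩
    exact sum_mem fun i _ => (hull ℝ A).smul_mem (hc i) (subset_hull (hv i))
  · intro hx
    obtain ⟨n, c, v, rfl⟩ := Submodule.mem_span_set'.1 hx
    exact ⟨n, fun i => c i, fun i => v i, fun i => (c i).2, fun i => (v i).2, rfl⟩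

lemma sumset_eq_nsmul {d : ℕ} (n : ℕ) (A : Set (Fin d → ℝ)) : sumset n A = n • A := by
  ext x
  simp only [Set.mem_nsmul, List.sum_ofFn]
  constructor
  · rintro ⟨f, hf, rfl⟩
    exact ⟨fun i => ⟨f i, hf i⟩, rfl⟩
  · rintro ⟨f, rfl⟩
    exact ⟨fun i => f i, fun i => (f i).2, rfl⟩

theorem stmt11 (d r : ℕ) (hr1 : 1 ≤ r) (S : Set (Fin d → ℝ)) (hfin : S.Finite)
    (hlat : ∀ x ∈ S, IsLatticePt x)
    -- `r` is the dimension of `Δ = conv(S)`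
    (hr : Module.finrank ℝ (affineSpan ℝ (convexHull ℝ S)).direction = r)
    -- `α ∈ ℤ^d` is a vertex (extreme point) of `Δ`
    (α : Fin d → ℝ) (hαlat : IsLatticePt α)
    (hα : α ∈ Set.extremePoints ℝ (convexHull ℝ S))
    (m : ℕ) (hm : r ≤ m) :
    (AddSubmonoid.closure
        (sumset m ((fun x => x - α) '' convexHull ℝ S) ∩ {x | IsLatticePt x}) :
      Set (Fin d → ℝ)) =
      coneOf ((fun x => x - α) '' convexHull ℝ S) ∩ {x | IsLatticePt x} := by
  rw [sumset_eq_nsmul, coneOf_eq_hull]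
  exact stmt11_general (L := latticeSubgroup d) hlat hαlat hα.1
    (by rwa [← Module.finrank_eq_rank, hr, Nat.cast_le])

end Stmt11
end
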